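/- arXiv:math/0611602 — 2 statements merged into one kernel-verified Lean document; each statement's English description precedes it below -/
import Mathlib

section
/- If L is a bounded lattice with 0 ≠ 1 in which complements are unique (whenever y and z are both complements of an element a, then y = z), B is a finite basis for L, and B is orthogonal (for every x ∈ B there exists y ∈ B that is a complement of x, i.e., x ⊓ y = 0 and x ⊔ y = 1), then the cardinality of B is even. -/
/-! By uniqueness of complements, sending each element of `B` to its complement in `B` is an
involution. It has no fixed point, since `x ⊓ x = ⊥` forces `x = ⊥ ∉ B`; a finite set with a
fixed-point-free involution has even cardinality. -/

/-- `B` is a basis for the lattice `L` with bottom element `⊥`. -/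
def IsLatticeBasis {L : Type*} [Lattice L] [OrderBot L] (B : Set L) : Prop :=
  (⊥ : L) ∉ B ∧
  (∀ x ∈ B, ∀ y ∈ B, x ≠ y → ¬x ≤ y ∧ ¬y ≤ x) ∧
  (∀ z : L, z ≠ ⊥ → ∃ x ∈ B, x ≤ z)

/-- If a bounded lattice with unique complements has a finite orthogonal
basis, then the dimension (cardinality of the basis) is even. -/
theorem orthogonal_basis_even_dim {L : Type*} [Lattice L] [BoundedOrder L]
    (hne : (⊥ : L) ≠ ⊤)
    (huniq : ∀ a y z : L, a ⊓ y = ⊥ → a ⊔ y = ⊤ → a ⊓ z = ⊥ → a ⊔ z = ⊤ → y = z)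
    (B : Set L) (hB : IsLatticeBasis B) (hfin : B.Finite)
    (horth : ∀ x ∈ B, ∃ y ∈ B, x ⊓ y = ⊥ ∧ x ⊔ y = ⊤) :
    Even (Nat.card B) := by
  classical
  have := hfin.fintype
  choose c hcB hinf hsup using horth
  let f : B → B := fun x => ⟨c x x.2, hcB x x.2⟩
  have hinv : ∀ x, f (f x) = x := fun x => Subtype.ext <|
    huniq (f x) _ _ (hinf _ (f x).2) (hsup _ (f x).2)
      (inf_comm (x : L) (f x) ▸ hinf _ x.2) (sup_comm (x : L) (f x) ▸ hsup _ x.2)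
  -- A basis element equal to its own complement would be `x ⊓ x = ⊥`.
  have hfix : ∀ x, f x ≠ x := fun x hx => hB.1 <| by
    have h : (x : L) ⊓ f x = ⊥ := hinf _ x.2
    rw [hx, inf_idem] at h
    exact h ▸ x.2
  -- Counting modulo 2, each element cancels against its complement.
  have hsum : ∑ _x : B, (1 : ZMod 2) = 0 :=
    Finset.sum_involution (fun x _ => f x) (fun _ _ => by decide) (fun x _ _ => hfix x)
      (fun _ _ => Finset.mem_univ _) (fun x _ => hinv x)
  rw [Nat.card_eq_fintype_card, ← ZMod.natCast_eq_zero_iff_even]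
  simpa using hsum
end

section
/- A finite Boolean algebra L with more than one element has an isolated element if and only if L has exactly 4 elements (equivalently, L is the two-dimensional Boolean algebra, isomorphic to the power set of a two-element set). -/
/-!
If `x ∉ {⊥, ⊤}`, then `⊥, ⊤, x, xᶜ` are four distinct elements. Complements in a Boolean algebra
are unique, so `x` is isolated exactly when these four elements exhaust the algebra.
-/

/-- `x` is an isolated element of a bounded lattice: `x ∉ {⊥, ⊤}` and every
`y ∉ {⊥, ⊤, x}` is a complement of `x`. -/
def IsIsolated {L : Type*} [Lattice L] [BoundedOrder L] (x : L) : Prop :=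
  x ≠ ⊥ ∧ x ≠ ⊤ ∧ ∀ y : L, y ≠ ⊥ → y ≠ ⊤ → y ≠ x → x ⊓ y = ⊥ ∧ x ⊔ y = ⊤

open Classical in
theorem card_bot_top_self_compl {L : Type*} [BooleanAlgebra L] [Nontrivial L] {x : L}
    (hb : x ≠ ⊥) (ht : x ≠ ⊤) : ({⊥, ⊤, x, xᶜ} : Finset L).card = 4 := by
  have h1 : (⊥ : L) ≠ xᶜ := fun h => ht (compl_eq_bot.mp h.symm)
  have h2 : (⊤ : L) ≠ xᶜ := fun h => hb (compl_eq_top.mp h.symm)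
  have h3 : x ≠ xᶜ := ne_compl_self
  rw [Finset.card_insert_of_notMem, Finset.card_insert_of_notMem, Finset.card_pair h3]
  · simp [ht.symm, h2]
  · simp [hb.symm, h1, bot_ne_top]

/-- A finite nontrivial Boolean algebra has an isolated element iff it has
exactly 4 elements (i.e. it is the two-dimensional Boolean algebra). -/
theorem exists_isolated_iff_card_eq_four {L : Type*} [BooleanAlgebra L]
    [Fintype L] [Nontrivial L] :
    (∃ x : L, IsIsolated x) ↔ Fintype.card L = 4 := by
  classical
  constructor
  · rintro ⟨x, hb, ht, hx⟩
    rw [← card_bot_top_self_compl hb ht, ← Finset.card_univ]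
    congr 1
    symm
    refine Finset.eq_univ_iff_forall.mpr fun y => ?_
    simp only [Finset.mem_insert, Finset.mem_singleton]
    by_contra! h
    obtain ⟨h1, h2, h3, h4⟩ := h
    obtain ⟨hi, hs⟩ := hx y h1 h2 h3
    exact h4 (IsCompl.of_eq hi hs).compl_eq.symm
  · intro hc
    obtain ⟨x, hx⟩ : ∃ x : L, x ∉ ({⊥, ⊤} : Finset L) := by
      by_contra! h
      have h2 := Finset.card_le_two (a := (⊥ : L)) (b := ⊤)
      rw [Finset.eq_univ_iff_forall.mpr h, Finset.card_univ, hc] at h2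
      omega
    simp only [Finset.mem_insert, Finset.mem_singleton, not_or] at hx
    obtain ⟨hb, ht⟩ := hx
    have hu : ({⊥, ⊤, x, xᶜ} : Finset L) = Finset.univ := by
      rw [← Finset.card_eq_iff_eq_univ, hc]
      exact card_bot_top_self_compl hb ht
    refine ⟨x, hb, ht, fun y h1 h2 h3 => ?_⟩
    have hy := Finset.mem_univ y
    rw [← hu] at hy
    simp only [Finset.mem_insert, Finset.mem_singleton, h1, h2, h3, false_or] at hy
    subst hy
    exact ⟨inf_compl_eq_bot, sup_compl_eq_top⟩
end
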